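/- arXiv:2510.17709 — 2 statements merged into one kernel-verified Lean document; each statement's English description precedes it below -/
import Mathlib

section
/- Fix a horizon N ∈ ℕ and a discount factor γ ∈ ℝ, and define the finite-horizon discounted objective J(t) = Σ_{k=0}^{N} γ^k · E_k(t), where E_k(t) = Σ_τ η(s_k,a_k) · P_k(t)(τ) sums over trajectories of length k. Then J is differentiable and J'(t) = Σ_{k=0}^{N} γ^k · Σ_τ η(s_k,a_k) · P_k(t)(τ) · ( (d/dt) log(π t s_k a_k) + Σ_{i=0}^{k-1} (d/dt) log( f t s_i a_i s_{i+1} · π t s_i a_i ) ). (Sensitivity of the expected value over the full discounted Markov chain.) -/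
theorem hasDerivAt_mul_log_aux {g : ℝ → ℝ} {t : ℝ} (hg : DifferentiableAt ℝ g t)
    (h0 : g t ≠ 0) : HasDerivAt g (g t * deriv (fun t => Real.log (g t)) t) t := by
  have h := (hg.hasDerivAt.log h0).deriv
  rw [h, mul_div_cancel₀ _ h0]
  exact hg.hasDerivAt

theorem hasDerivAt_prod_log_aux {ι : Type*} (s : Finset ι) (g : ι → ℝ → ℝ) (t : ℝ)
    (hg : ∀ i, DifferentiableAt ℝ (g i) t) (h0 : ∀ i, g i t ≠ 0) :
    HasDerivAt (fun t => ∏ i ∈ s, g i t)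
      ((∏ i ∈ s, g i t) * ∑ i ∈ s, deriv (fun t => Real.log (g i t)) t) t := by
  classical
  induction s using Finset.induction_on with
  | empty => simpa using hasDerivAt_const t (1 : ℝ)
  | insert a s ha ih =>
    simp only [Finset.prod_insert ha, Finset.sum_insert ha]
    refine ((hasDerivAt_mul_log_aux (hg a) (h0 a)).fun_mul ih).congr_deriv ?_
    ring

/-- Sensitivity of the expected value over the full discounted Markov chain:
`J(t) = Σ_{k=0}^{N} γ^k · E_k(t)` is differentiable with derivative
`Σ_{k=0}^{N} γ^k Σ_τ η(s_k,a_k) P_k(t)(τ) (d/dt log π(a_k|s_k) + Σ_{i<k} d/dt log(f π))`. -/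
theorem discounted_markov_chain_sensitivity
    {S A : Type*} [Fintype S] [Fintype A] [Nonempty S] [Nonempty A]
    (N : ℕ) (γ : ℝ) (ρ0 : S → ℝ) (η : S → A → ℝ)
    (π : ℝ → S → A → ℝ) (f : ℝ → S → A → S → ℝ)
    (hπpos : ∀ t s a, 0 < π t s a)
    (hπdiff : ∀ s a, Differentiable ℝ (fun t => π t s a))
    (hfpos : ∀ t s a s', 0 < f t s a s')
    (hfdiff : ∀ s a s', Differentiable ℝ (fun t => f t s a s'))
    (P : ∀ k : ℕ, ℝ → ((Fin (k + 1) → S) × (Fin (k + 1) → A)) → ℝ)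
    (hP : ∀ k t τ, P k t τ =
      ρ0 (τ.1 0) * π t (τ.1 (Fin.last k)) (τ.2 (Fin.last k)) *
        ∏ i : Fin k,
          (f t (τ.1 i.castSucc) (τ.2 i.castSucc) (τ.1 i.succ) *
            π t (τ.1 i.castSucc) (τ.2 i.castSucc)))
    (t : ℝ) :
    HasDerivAt
      (fun t => ∑ k ∈ Finset.range (N + 1), γ ^ k *
        ∑ τ : (Fin (k + 1) → S) × (Fin (k + 1) → A),
          η (τ.1 (Fin.last k)) (τ.2 (Fin.last k)) * P k t τ)
      (∑ k ∈ Finset.range (N + 1), γ ^ k *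
        ∑ τ : (Fin (k + 1) → S) × (Fin (k + 1) → A),
          η (τ.1 (Fin.last k)) (τ.2 (Fin.last k)) * P k t τ *
            (deriv (fun t => Real.log (π t (τ.1 (Fin.last k)) (τ.2 (Fin.last k)))) t +
              ∑ i : Fin k,
                deriv (fun t =>
                  Real.log (f t (τ.1 i.castSucc) (τ.2 i.castSucc) (τ.1 i.succ) *
                    π t (τ.1 i.castSucc) (τ.2 i.castSucc))) t)) t := by
  refine HasDerivAt.fun_sum fun k _ => HasDerivAt.const_mul _ (HasDerivAt.fun_sum fun τ _ => ?_)
  rw [mul_assoc]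
  refine HasDerivAt.const_mul _ ?_
  simp only [hP]
  have h1 := hasDerivAt_mul_log_aux (hπdiff (τ.1 (Fin.last k)) (τ.2 (Fin.last k)) t)
    (hπpos t _ _).ne'
  have h2 := hasDerivAt_prod_log_aux Finset.univ
    (fun (i : Fin k) t => f t (τ.1 i.castSucc) (τ.2 i.castSucc) (τ.1 i.succ) *
            π t (τ.1 i.castSucc) (τ.2 i.castSucc)) t
    (fun i => (hfdiff _ _ _ t).fun_mul (hπdiff _ _ t))
    (fun i => (mul_pos (hfpos _ _ _ _) (hπpos _ _ _)).ne')
  refine ((h1.const_mul (ρ0 (τ.1 0))).fun_mul h2).congr_deriv ?_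
  ring
end

section
/- Let ĝ(φ,θ) = Σ_{k=0}^{N} γ^k · Σ_τ P_k(φ,θ)(τ) · ∂_φ log(π φ s_k a_k) · Q̂ φ θ s_k a_k be the finite-horizon in-sim stochastic policy gradient, and suppose φ̄ : ℝ → ℝ is differentiable with ĝ(φ̄(θ), θ) = 0 for all θ (the in-sim policy is stationary for every simulator parameter). Fix θ₀ and set D = Σ_{k=0}^{N} γ^k Σ_τ P_k(τ) · ( ∂²_{φφ} log π(a_k|s_k) · Q̂ + ∂_φ log π(a_k|s_k) · ∂_φ Q̂ + ∂_φ log π(a_k|s_k) · Q̂ · Σ_{i=0}^{k} ∂_φ log π(a_i|s_i) ) and Nm = Σ_{k=0}^{N} γ^k Σ_τ P_k(τ) · ( ∂_φ log π(a_k|s_k) · ∂_θ Q̂ + ∂_φ log π(a_k|s_k) · Q̂ · Σ_{i=0}^{k-1} ∂_θ log f(s_{i+1}|s_i,a_i) ), both evaluated at (φ̄(θ₀), θ₀). If D ≠ 0, then the sensitivity of the in-sim policy parameter with respect to the simulator parameter is φ̄'(θ₀) = − Nm / D. (Theorem 1: sensitivity of the in-sim stochastic policy gradient, scalar-parameter form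 with fully decomposed Jacobians.) -/
/-- Logarithmic derivative trick for finite products of positive functions. -/
lemma hasDerivAt_prod_log {ι : Type*} [Fintype ι] (u : ι → ℝ → ℝ) (x : ℝ)
    (hpos : ∀ i y, 0 < u i y) (hd : ∀ i, Differentiable ℝ (u i)) :
    HasDerivAt (fun y => ∏ i, u i y)
      ((∏ i, u i x) * ∑ i, deriv (fun y => Real.log (u i y)) x) x := by
  have h1 : ∀ i, HasDerivAt (fun y => Real.log (u i y))
      (deriv (fun y => Real.log (u i y)) x) x := fun i =>
    (((hd i) x).log (hpos i x).ne').hasDerivAt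
  have h2 := (HasDerivAt.fun_sum (u := Finset.univ) (fun i _ => h1 i)).exp
  have h3 : ∀ y, Real.exp (∑ i, Real.log (u i y)) = ∏ i, u i y := by
    intro y
    rw [Real.exp_sum]
    exact Finset.prod_congr rfl (fun i _ => Real.exp_log (hpos i y))
  simpa only [h3] using h2

/-- Theorem 1 (sensitivity of the in-sim stochastic policy gradient, scalar-parameter
form): if the in-sim policy parameter `φ̄(θ)` is stationary for the in-sim SPG `ĝ` for
every simulator parameter `θ`, then `φ̄'(θ₀) = −Nm/D` where `D` and `Nm` are the fully
decomposed Jacobians of `ĝ` w.r.t. `φ` and `θ` at `(φ̄(θ₀), θ₀)`. -/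
theorem in_sim_spg_sensitivity_scalar
    {S A : Type*} [Fintype S] [Fintype A] [Nonempty S] [Nonempty A]
    (N : ℕ) (γ : ℝ) (ρ0 : S → ℝ)
    (π : ℝ → S → A → ℝ) (f : ℝ → S → A → S → ℝ)
    (Qh : ℝ → ℝ → S → A → ℝ)
    (hπpos : ∀ φ s a, 0 < π φ s a)
    (hπdiff : ∀ s a, Differentiable ℝ (fun φ => π φ s a))
    (hπdiff2 : ∀ s a, Differentiable ℝ (deriv (fun φ => π φ s a)))
    (hfpos : ∀ θ s a s', 0 < f θ s a s')
    (hfdiff : ∀ s a s', Differentiable ℝ (fun θ => f θ s a s'))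
    (hQdiffφ : ∀ θ s a, Differentiable ℝ (fun φ => Qh φ θ s a))
    (hQdiffθ : ∀ φ s a, Differentiable ℝ (fun θ => Qh φ θ s a))
    (P : ∀ k : ℕ, ℝ → ℝ → ((Fin (k + 1) → S) × (Fin (k + 1) → A)) → ℝ)
    (hP : ∀ k φ θ τ, P k φ θ τ =
      ρ0 (τ.1 0) * π φ (τ.1 (Fin.last k)) (τ.2 (Fin.last k)) *
        ∏ i : Fin k,
          (f θ (τ.1 i.castSucc) (τ.2 i.castSucc) (τ.1 i.succ) *
            π φ (τ.1 i.castSucc) (τ.2 i.castSucc)))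
    (g : ℝ → ℝ → ℝ)
    (hg : ∀ φ θ, g φ θ =
      ∑ k ∈ Finset.range (N + 1), γ ^ k *
        ∑ τ : (Fin (k + 1) → S) × (Fin (k + 1) → A),
          P k φ θ τ *
            deriv (fun φ' => Real.log (π φ' (τ.1 (Fin.last k)) (τ.2 (Fin.last k)))) φ *
            Qh φ θ (τ.1 (Fin.last k)) (τ.2 (Fin.last k)))
    (hgsmooth : ContDiff ℝ 1 (fun p : ℝ × ℝ => g p.1 p.2))
    (φbar : ℝ → ℝ)
    (hφbar : Differentiable ℝ φbar)
    (hstat : ∀ θ, g (φbar θ) θ = 0)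
    (θ₀ : ℝ) (D Nm : ℝ)
    (hD : D =
      ∑ k ∈ Finset.range (N + 1), γ ^ k *
        ∑ τ : (Fin (k + 1) → S) × (Fin (k + 1) → A),
          P k (φbar θ₀) θ₀ τ *
            (deriv (deriv (fun φ => Real.log (π φ (τ.1 (Fin.last k)) (τ.2 (Fin.last k))))) (φbar θ₀) *
                Qh (φbar θ₀) θ₀ (τ.1 (Fin.last k)) (τ.2 (Fin.last k)) +
              deriv (fun φ => Real.log (π φ (τ.1 (Fin.last k)) (τ.2 (Fin.last k)))) (φbar θ₀) *
                deriv (fun φ => Qh φ θ₀ (τ.1 (Fin.last k)) (τ.2 (Fin.last k))) (φbar θ₀) +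
              deriv (fun φ => Real.log (π φ (τ.1 (Fin.last k)) (τ.2 (Fin.last k)))) (φbar θ₀) *
                Qh (φbar θ₀) θ₀ (τ.1 (Fin.last k)) (τ.2 (Fin.last k)) *
                ∑ i : Fin (k + 1),
                  deriv (fun φ => Real.log (π φ (τ.1 i) (τ.2 i))) (φbar θ₀)))
    (hNm : Nm =
      ∑ k ∈ Finset.range (N + 1), γ ^ k *
        ∑ τ : (Fin (k + 1) → S) × (Fin (k + 1) → A),
          P k (φbar θ₀) θ₀ τ *
            (deriv (fun φ => Real.log (π φ (τ.1 (Fin.last k)) (τ.2 (Fin.last k)))) (φbar θ₀) *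
                deriv (fun θ => Qh (φbar θ₀) θ (τ.1 (Fin.last k)) (τ.2 (Fin.last k))) θ₀ +
              deriv (fun φ => Real.log (π φ (τ.1 (Fin.last k)) (τ.2 (Fin.last k)))) (φbar θ₀) *
                Qh (φbar θ₀) θ₀ (τ.1 (Fin.last k)) (τ.2 (Fin.last k)) *
                ∑ i : Fin k,
                  deriv (fun θ =>
                    Real.log (f θ (τ.1 i.castSucc) (τ.2 i.castSucc) (τ.1 i.succ))) θ₀))
    (hDne : D ≠ 0) :
    deriv φbar θ₀ = -Nm / D := by
  have hP' : ∀ k φ θ τ, P k φ θ τ = ρ0 (τ.1 0) * (∏ i : Fin (k + 1), π φ (τ.1 i) (τ.2 i)) *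
      ∏ i : Fin k, f θ (τ.1 i.castSucc) (τ.2 i.castSucc) (τ.1 i.succ) := by
    intro k φ θ τ
    rw [hP, Finset.prod_mul_distrib, Fin.prod_univ_castSucc]
    ring
  have hPφ : ∀ k τ, HasDerivAt (fun φ => P k φ θ₀ τ) (P k (φbar θ₀) θ₀ τ *
      ∑ i : Fin (k + 1), deriv (fun φ => Real.log (π φ (τ.1 i) (τ.2 i))) (φbar θ₀))
      (φbar θ₀) := by
    intro k τ
    have h := hasDerivAt_prod_log (fun (i : Fin (k + 1)) φ => π φ (τ.1 i) (τ.2 i)) (φbar θ₀)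
      (fun i y => hπpos _ _ _) (fun i => hπdiff _ _)
    simp only [hP']
    refine ((h.const_mul (ρ0 (τ.1 0))).mul_const _).congr_deriv ?_
    ring
  have hPθ : ∀ k τ, HasDerivAt (fun θ => P k (φbar θ₀) θ τ) (P k (φbar θ₀) θ₀ τ *
      ∑ i : Fin k, deriv (fun θ =>
        Real.log (f θ (τ.1 i.castSucc) (τ.2 i.castSucc) (τ.1 i.succ))) θ₀) θ₀ := by
    intro k τ
    have h := hasDerivAt_prod_log
      (fun (i : Fin k) θ => f θ (τ.1 i.castSucc) (τ.2 i.castSucc) (τ.1 i.succ)) θ₀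
      (fun i y => hfpos _ _ _ _) (fun i => hfdiff _ _ _)
    simp only [hP']
    refine (h.const_mul _).congr_deriv ?_
    ring
  have hlog2 : ∀ s a, Differentiable ℝ (deriv (fun φ => Real.log (π φ s a))) := by
    intro s a
    have : deriv (fun φ => Real.log (π φ s a)) =
        fun φ => deriv (fun φ => π φ s a) φ / π φ s a := by
      funext φ
      exact deriv.log (hπdiff s a φ) (hπpos φ s a).ne'
    rw [this]
    exact (hπdiff2 s a).div (hπdiff s a) (fun φ => (hπpos φ s a).ne')
  have hgφ : HasDerivAt (fun φ => g φ θ₀) D (φbar θ₀) := by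
    simp only [hg]
    rw [hD]
    refine HasDerivAt.fun_sum fun k _ => HasDerivAt.const_mul _ (HasDerivAt.fun_sum fun τ _ => ?_)
    refine (((hPφ k τ).mul (hlog2 _ _ _).hasDerivAt).mul
      (hQdiffφ θ₀ _ _ _).hasDerivAt).congr_deriv ?_
    simp only [Pi.mul_apply]
    ring
  have hgθ : HasDerivAt (fun θ => g (φbar θ₀) θ) Nm θ₀ := by
    simp only [hg]
    rw [hNm]
    refine HasDerivAt.fun_sum fun k _ => HasDerivAt.const_mul _ (HasDerivAt.fun_sum fun τ _ => ?_)
    refine (((hPθ k τ).mul_const _).mul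
      (hQdiffθ (φbar θ₀) _ _ _).hasDerivAt).congr_deriv ?_
    ring
  have hG : HasFDerivAt (fun p : ℝ × ℝ => g p.1 p.2)
      (fderiv ℝ (fun p : ℝ × ℝ => g p.1 p.2) (φbar θ₀, θ₀)) (φbar θ₀, θ₀) :=
    ((hgsmooth.differentiable one_ne_zero) _).hasFDerivAt
  set L := fderiv ℝ (fun p : ℝ × ℝ => g p.1 p.2) (φbar θ₀, θ₀) with hL
  have e1 : L (1, 0) = D :=
    (HasFDerivAt.comp_hasDerivAt (φbar θ₀) (f := fun φ => (φ, θ₀)) hG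
      ((hasDerivAt_id (φbar θ₀)).prodMk (hasDerivAt_const _ θ₀))).unique hgφ
  have e2 : L (0, 1) = Nm :=
    (HasFDerivAt.comp_hasDerivAt θ₀ (f := fun θ => (φbar θ₀, θ)) hG
      ((hasDerivAt_const _ (φbar θ₀)).prodMk (hasDerivAt_id θ₀))).unique hgθ
  have e3 : L (deriv φbar θ₀, 1) = 0 := by
    refine (HasFDerivAt.comp_hasDerivAt θ₀ (f := fun θ => (φbar θ, θ)) hG
      ((hφbar θ₀).hasDerivAt.prodMk (hasDerivAt_id θ₀))).unique ?_
    have : ((fun p : ℝ × ℝ => g p.1 p.2) ∘ fun θ => (φbar θ, θ)) = fun _ => 0 := by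
      funext θ
      exact hstat θ
    rw [this]
    exact hasDerivAt_const _ _
  have e4 : ((deriv φbar θ₀, 1) : ℝ × ℝ) = deriv φbar θ₀ • ((1, 0) : ℝ × ℝ) + (0, 1) := by
    simp
  rw [e4, map_add, map_smul, e1, e2, smul_eq_mul] at e3
  rw [eq_div_iff hDne]
  linarith
end
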